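/- Let γ be a T-periodic solution of the Hamiltonian system ẋ = J∇Γ(x) and let S be a 2n×2n real orthogonal matrix with SJ = −JS, Γ(Sx) = Γ(x) for all x, and γ(−s + T/N) = S γ(s) for all s, for some N ∈ ℕ, N ≥ 1. Let Y : ℝ → M_{2n}(ℝ) satisfy Y′(s) = J·D²Γ(γ(s))·Y(s) with Y(0) = Y₀ invertible. Then Y(−s + T/N) = S Y(s) Y₀⁻¹ Sᵀ Y(T/N) for all s, and consequently Y(T/N) = S Y₀ B⁻¹ Sᵀ B, where B = Y(T/(2N)). -/

import Mathlib

open Matrix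

/-- The standard `2n × 2n` symplectic matrix `J = [[0, I],[−I, 0]]`, with the index set
`Fin n ⊕ Fin n` (first summand: configuration coordinates, second: momenta). -/
def stdJ (n : ℕ) : Matrix (Fin n ⊕ Fin n) (Fin n ⊕ Fin n) ℝ :=
  Matrix.fromBlocks 0 1 (-1) 0

/-- The gradient of `f : ℝ^ι → ℝ` at `x`, componentwise via the Fréchet derivative. -/
noncomputable def gradV {ι : Type} [Fintype ι] [DecidableEq ι]
    (f : (ι → ℝ) → ℝ) (x : ι → ℝ) : ι → ℝ :=
  fun i => fderiv ℝ f x (Pi.single i 1)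

/-- The Hessian matrix `D²f(x)` of `f : ℝ^ι → ℝ` at `x`. -/
noncomputable def hessM {ι : Type} [Fintype ι] [DecidableEq ι]
    (f : (ι → ℝ) → ℝ) (x : ι → ℝ) : Matrix ι ι ℝ :=
  Matrix.of fun i j => fderiv ℝ (fun y => fderiv ℝ f y (Pi.single j 1)) x (Pi.single i 1)

/-!
If `A (τ - s) = -(S * A s * S⁻¹)`, then `s ↦ Y (τ - s)` and `s ↦ S * Y s` solve the same linear
equation, so they differ by a constant factor on the right, which is read off at `s = 0`;
evaluating at the fixed point `s = τ / 2` of the reflection gives the factorization of `Y τ`.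
For `A s = J * D²Γ(γ s)` the reversing identity follows from `S * J * Sᵀ = -J`, the chain rule
`D²Γ(x) = Sᵀ * D²Γ(S x) * S` and the symmetry of `γ`. Solutions of a linear equation that agree
at one time agree always, so a right annihilator of `Y t` annihilates `Y 0`: this is why
`Y (τ / 2)` is invertible.
-/

/-- `Y` solves the linear differential equation `Y' = A(s) Y` on the whole line, with values in a
normed algebra; for matrices this covers fundamental solutions. -/
def IsLinearODESolution {R : Type*} [NormedRing R] [NormedAlgebra ℝ R] (A Y : ℝ → R) : Prop :=
  ∀ s, HasDerivAt Y (A s * Y s) s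

namespace IsLinearODESolution

variable {R : Type*} [NormedRing R] [NormedAlgebra ℝ R] {A X Y : ℝ → R}

theorem mul_const (hY : IsLinearODESolution A Y) (c : R) :
    IsLinearODESolution A (fun s => Y s * c) := fun s => by
  simpa only [mul_assoc] using (hY s).mul_const c

theorem units_mul (hY : IsLinearODESolution A Y) (S : Rˣ) :
    IsLinearODESolution (fun s => S * A s * ↑S⁻¹) (fun s => S * Y s) := fun s => by
  simpa only [mul_assoc, Units.inv_mul_cancel_left] using (hY s).const_mul (S : R)

theorem const_sub (hY : IsLinearODESolution A Y) (τ : ℝ) :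
    IsLinearODESolution (fun s => -A (τ - s)) (fun s => Y (τ - s)) := fun s => by
  simpa only [neg_mul] using (hY (τ - s)).comp_const_sub τ s

theorem eq_of_apply_eq (hA : Continuous A) (hX : IsLinearODESolution A X)
    (hY : IsLinearODESolution A Y) {t₀ : ℝ} (h : X t₀ = Y t₀) (t : ℝ) : X t = Y t := by
  obtain ⟨a, b, ht, ht₀⟩ : ∃ a b, t ∈ Set.Ioo a b ∧ t₀ ∈ Set.Ioo a b :=
    ⟨min t t₀ - 1, max t t₀ + 1, by grind, by grind⟩
  obtain ⟨C, hC⟩ := isCompact_Icc.exists_bound_of_continuousOn (hA.continuousOn (s := Set.Icc a b))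
  have lipschitz : ∀ s ∈ Set.Ioo a b,
      LipschitzOnWith C.toNNReal (fun x => A s * x) Set.univ := fun s hs =>
    LipschitzOnWith.of_dist_le_mul fun x _ y _ => by
      rw [dist_eq_norm, dist_eq_norm, ← mul_sub]
      exact (norm_mul_le _ _).trans <| by
        gcongr
        exact (hC s (Set.Ioo_subset_Icc_self hs)).trans C.le_coe_toNNReal
  exact ODE_solution_unique_of_mem_Ioo lipschitz ht₀ (fun s _ => ⟨hX s, trivial⟩)
    (fun s _ => ⟨hY s, trivial⟩) h ht

theorem isLeftRegular (hA : Continuous A) (hY : IsLinearODESolution A Y) {t₀ : ℝ}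
    (h : IsLeftRegular (Y t₀)) (t : ℝ) : IsLeftRegular (Y t) := fun c d hcd =>
  h <| (hY.mul_const c).eq_of_apply_eq hA (hY.mul_const d) hcd t₀

variable {τ : ℝ} {S Y₀ : Rˣ}

theorem apply_const_sub_of_reversing (hA : Continuous A) (hrev : ∀ s, A (τ - s) = -(S * A s * ↑S⁻¹))
    (hY : IsLinearODESolution A Y) (hY₀ : Y 0 = Y₀) (s : ℝ) :
    Y (τ - s) = S * Y s * ↑Y₀⁻¹ * ↑S⁻¹ * Y τ := by
  have reversed : IsLinearODESolution (fun s => S * A s * ↑S⁻¹) (fun s => Y (τ - s)) := by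
    simpa only [hrev, neg_neg] using hY.const_sub τ
  have conjugated := (hY.units_mul S).mul_const (↑Y₀⁻¹ * ↑S⁻¹ * Y τ)
  have initial : Y (τ - 0) = S * Y 0 * (↑Y₀⁻¹ * ↑S⁻¹ * Y τ) := by
    simp [hY₀, mul_assoc]
  simpa only [mul_assoc] using reversed.eq_of_apply_eq (by fun_prop) conjugated initial s

theorem apply_eq_of_reversing {B : Rˣ} (hA : Continuous A)
    (hrev : ∀ s, A (τ - s) = -(S * A s * ↑S⁻¹)) (hY : IsLinearODESolution A Y)
    (hY₀ : Y 0 = Y₀) (hB : Y (τ / 2) = B) : Y τ = S * Y₀ * ↑B⁻¹ * ↑S⁻¹ * B := by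
  have half : (B : R) = ↑(S * B * Y₀⁻¹ * S⁻¹) * Y τ := by
    simpa [hB, sub_half] using hY.apply_const_sub_of_reversing hA hrev hY₀ (τ / 2)
  rw [← Units.inv_mul_eq_iff_eq_mul] at half
  simpa [mul_assoc] using half.symm

end IsLinearODESolution

section Hessian

theorem fderiv_fderiv_comp_clm {𝕜 E F G : Type*} [NontriviallyNormedField 𝕜]
    [NormedAddCommGroup E] [NormedSpace 𝕜 E] [NormedAddCommGroup F] [NormedSpace 𝕜 F]
    [NormedAddCommGroup G] [NormedSpace 𝕜 G] {f : F → G} (hf : ContDiff 𝕜 2 f) (L : E →L[𝕜] F)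
    (x u v : E) :
    fderiv 𝕜 (fderiv 𝕜 (f ∘ L)) x u v = fderiv 𝕜 (fderiv 𝕜 f) (L x) (L u) (L v) := by
  have := DFunLike.congr_fun (L.iteratedFDeriv_comp_right hf x le_rfl) ![u, v]
  simpa [iteratedFDeriv_two_apply] using this

variable {ι : Type} [Fintype ι] [DecidableEq ι] {f : (ι → ℝ) → ℝ}

theorem hessM_apply (hf : ContDiff ℝ 2 f) (x : ι → ℝ) (i j : ι) :
    hessM f x i j = fderiv ℝ (fderiv ℝ f) x (Pi.single i 1) (Pi.single j 1) := by
  have hdiff : DifferentiableAt ℝ (fderiv ℝ f) x :=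
    (hf.fderiv_right (m := 1) le_rfl).differentiable one_ne_zero x
  simp [hessM, fderiv_clm_apply hdiff (differentiableAt_const _)]

theorem continuous_hessM (hf : ContDiff ℝ 2 f) : Continuous (hessM f) := by
  have hcont : Continuous (fderiv ℝ (fderiv ℝ f)) :=
    (hf.fderiv_right (m := 1) le_rfl).continuous_fderiv one_ne_zero
  refine continuous_matrix fun i j => ?_
  simp only [hessM_apply hf]
  exact (hcont.clm_apply continuous_const).clm_apply continuous_const

theorem hessM_comp_mulVec {κ : Type} [Fintype κ] [DecidableEq κ] (hf : ContDiff ℝ 2 f)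
    (S : Matrix ι κ ℝ) (x : κ → ℝ) :
    hessM (fun y => f (S *ᵥ y)) x = Sᵀ * hessM f (S *ᵥ x) * S := by
  let L : (κ → ℝ) →L[ℝ] (ι → ℝ) := S.mulVecLin.toContinuousLinearMap
  let D : (ι → ℝ) →ₗ[ℝ] (ι → ℝ) →ₗ[ℝ] ℝ :=
    (ContinuousLinearMap.coeLM ℝ).comp (fderiv ℝ (fderiv ℝ f) (S *ᵥ x)).toLinearMap
  have hD : hessM f (S *ᵥ x) = LinearMap.toMatrix₂' ℝ D := by
    ext i j
    exact hessM_apply hf _ i j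
  have hcomp : hessM (f ∘ L) x = LinearMap.toMatrix₂' ℝ (D.compl₁₂ S.mulVecLin S.mulVecLin) := by
    ext i j
    exact (hessM_apply (hf.comp L.contDiff) x i j).trans (fderiv_fderiv_comp_clm hf L x _ _)
  calc hessM (f ∘ L) x = Sᵀ * LinearMap.toMatrix₂' ℝ D * S := by
        rw [hcomp, LinearMap.toMatrix₂'_compl₁₂, ← Matrix.toLin'_apply', LinearMap.toMatrix'_toLin']
    _ = Sᵀ * hessM f (S *ᵥ x) * S := by rw [hD]

theorem mul_hessM_mulVec_of_antisymplectic (hf : ContDiff ℝ 2 f) {J S : Matrix ι ι ℝ}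
    (hS : IsUnit S) (hSJ : S * J * Sᵀ = -J) (hfS : ∀ x, f (S *ᵥ x) = f x) (x : ι → ℝ) :
    J * hessM f (S *ᵥ x) = -(S * (J * hessM f x) * S⁻¹) := by
  have hdet : IsUnit S.det := (Matrix.isUnit_iff_isUnit_det S).mp hS
  have hconj : hessM f x = Sᵀ * hessM f (S *ᵥ x) * S := by
    simpa only [hfS] using hessM_comp_mulVec hf S x
  calc J * hessM f (S *ᵥ x)
      = -(S * J * Sᵀ * hessM f (S *ᵥ x)) := by rw [hSJ, neg_mul, neg_neg]
    _ = -(S * (J * (Sᵀ * hessM f (S *ᵥ x) * S)) * S⁻¹) := by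
        simp only [mul_assoc, Matrix.mul_nonsing_inv S hdet, mul_one]
    _ = -(S * (J * hessM f x) * S⁻¹) := by rw [← hconj]

end Hessian

section MatrixValued

theorem hasDerivAt_matrix {m n : Type*} [Finite m] [Finite n] {Z : ℝ → Matrix m n ℝ}
    {Z' : Matrix m n ℝ} {s : ℝ} :
    HasDerivAt Z Z' s ↔ ∀ i j, HasDerivAt (fun u => Z u i j) (Z' i j) s := by
  have := Fintype.ofFinite m
  have := Fintype.ofFinite n
  exact (hasDerivAt_pi (E' := fun _ => n → ℝ)).trans <| forall_congr' fun _ => hasDerivAt_pi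

attribute [local instance] Matrix.linftyOpNormedRing Matrix.linftyOpNormedAlgebra

theorem IsLinearODESolution.isUnit_of_matrix {ι : Type*} [Fintype ι] [DecidableEq ι]
    {A Y : ℝ → Matrix ι ι ℝ} (hA : Continuous A) (hY : IsLinearODESolution A Y) {t₀ : ℝ}
    (h : IsUnit (Y t₀)) (t : ℝ) : IsUnit (Y t) :=
  have : IsArtinianRing (Matrix ι ι ℝ)ᵐᵒᵖ := IsArtinianRing.of_finite ℝ _
  IsArtinianRing.isUnit_iff_isLeftRegular.mpr <| hY.isLeftRegular hA h.isRegular.left t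

theorem roberts_time_reversing_general_general {ι : Type} [Fintype ι] [DecidableEq ι]
    {J S : Matrix ι ι ℝ} (hS : IsUnit S) (hSJ : S * J * Sᵀ = -J)
    {Γ : (ι → ℝ) → ℝ} (hΓ : ContDiff ℝ 2 Γ) (hΓS : ∀ x, Γ (S *ᵥ x) = Γ x)
    {γ : ℝ → ι → ℝ} (hγ : Continuous γ) {τ : ℝ} (hγS : ∀ s, γ (τ - s) = S *ᵥ γ s)
    {Y : ℝ → Matrix ι ι ℝ} (hY₀ : IsUnit (Y 0))
    (hY : ∀ s i j, HasDerivAt (fun u => Y u i j) ((J * hessM Γ (γ s) * Y s) i j) s) :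
    (∀ s, Y (τ - s) = S * Y s * (Y 0)⁻¹ * S⁻¹ * Y τ) ∧
      Y τ = S * Y 0 * (Y (τ / 2))⁻¹ * S⁻¹ * Y (τ / 2) := by
  have hA : Continuous fun s => J * hessM Γ (γ s) :=
    continuous_const.matrix_mul ((continuous_hessM hΓ).comp hγ)
  have hsol : IsLinearODESolution (fun s => J * hessM Γ (γ s)) Y := fun s =>
    hasDerivAt_matrix.mpr (hY s)
  obtain ⟨B, hB⟩ := hsol.isUnit_of_matrix hA hY₀ (τ / 2)
  obtain ⟨Y₀, hY₀⟩ := hY₀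
  obtain ⟨S, rfl⟩ := hS
  have hrev : ∀ s, J * hessM Γ (γ (τ - s)) =
      -(S * (J * hessM Γ (γ s)) * (↑S⁻¹ : Matrix ι ι ℝ)) := fun s => by
    rw [hγS, mul_hessM_mulVec_of_antisymplectic hΓ S.isUnit hSJ hΓS, Matrix.coe_units_inv]
  simp only [← hB, ← hY₀, ← Matrix.coe_units_inv]
  exact ⟨hsol.apply_const_sub_of_reversing hA hrev hY₀.symm,
    hsol.apply_eq_of_reversing hA hrev hY₀.symm hB.symm⟩

end MatrixValued

/-- Roberts' remark for non-identity initial conditions (time-reversing case): if `Y` solves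
the linearization along `γ` with `Y(0) = Y₀` invertible, then
`Y(−s + T/N) = S Y(s) Y₀⁻¹ Sᵀ Y(T/N)` for all `s`, and consequently
`Y(T/N) = S Y₀ B⁻¹ Sᵀ B` with `B = Y(T/(2N))`. -/
theorem roberts_time_reversing_general (n N : ℕ) (hn : 1 ≤ n) (hN : 1 ≤ N) (T : ℝ) (hT : 0 < T)
    (Γ : ((Fin n ⊕ Fin n) → ℝ) → ℝ) (hΓ : ContDiff ℝ 2 Γ)
    (γ : ℝ → (Fin n ⊕ Fin n) → ℝ)
    (hsol : ∀ s : ℝ, HasDerivAt γ ((stdJ n).mulVec (gradV Γ (γ s))) s)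
    (hper : ∀ s : ℝ, γ (s + T) = γ s)
    (S : Matrix (Fin n ⊕ Fin n) (Fin n ⊕ Fin n) ℝ)
    (hsym : ∀ s : ℝ, γ (-s + T / N) = S.mulVec (γ s))
    (hSinv : ∀ x, Γ (S.mulVec x) = Γ x)
    (hSJ : S * stdJ n = -(stdJ n * S))
    (horth : Sᵀ * S = 1)
    (Y₀ : Matrix (Fin n ⊕ Fin n) (Fin n ⊕ Fin n) ℝ) (hY₀ : IsUnit Y₀)
    (Y : ℝ → Matrix (Fin n ⊕ Fin n) (Fin n ⊕ Fin n) ℝ)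
    (hY0 : Y 0 = Y₀)
    (hY : ∀ (s : ℝ) (i j : Fin n ⊕ Fin n),
      HasDerivAt (fun u => Y u i j) ((stdJ n * hessM Γ (γ s) * Y s) i j) s) :
    (∀ s : ℝ, Y (-s + T / N) = S * Y s * Y₀⁻¹ * Sᵀ * Y (T / N)) ∧
    Y (T / N) = S * Y₀ * (Y (T / (2 * N)))⁻¹ * Sᵀ * Y (T / (2 * N)) := by
  have hSJS : S * stdJ n * Sᵀ = -stdJ n := by
    rw [hSJ, neg_mul, mul_assoc, mul_eq_one_comm.mp horth, mul_one]
  have hγ : Continuous γ := continuous_iff_continuousAt.mpr fun s => (hsol s).continuousAt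
  simpa only [neg_add_eq_sub, Matrix.inv_eq_left_inv horth, hY0, div_mul_eq_div_div_swap] using
    roberts_time_reversing_general_general (IsUnit.of_mul_eq_one_right _ horth) hSJS hΓ hSinv hγ
      (fun s => by rw [← neg_add_eq_sub, hsym]) (hY0 ▸ hY₀) hY
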